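/- For the elementary Nielsen automorphism φ (a ↦ ab, fixing b and each c_j) and any reduced word w such that w·c_j is reduced, the image of the cylinder C¹_{w·c_j} under the boundary extension of φ equals C¹_{φ(w)·c_j}, and analogously φ(C¹_{w·c_j⁻¹}) = C¹_{φ(w)·c_j⁻¹} when w·c_j⁻¹ is reduced. -/

import Mathlib

open FreeGroup

variable {α : Type*}

/-- Inverse of a letter `(x, b)` in the alphabet `A ∪ A⁻¹`. -/
def linv (x : α × Bool) : α × Bool := (x.1, !x.2)

/-- The boundary `∂F(A)`: infinite reduced words over `A ∪ A⁻¹`. -/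
def Bd (α : Type*) : Type _ := {ξ : ℕ → α × Bool // ∀ n, ξ (n + 1) ≠ linv (ξ n)}

/-- The cylinder `C¹_w` of all infinite reduced words with prefix `w`. -/
def Cyl (w : List (α × Bool)) : Set (Bd α) :=
  {ξ | ∀ i, (h : i < w.length) → ξ.1 i = w.get ⟨i, h⟩}

/-- The length-`m` prefix of an infinite reduced word. -/
def pre (ξ : Bd α) (m : ℕ) : List (α × Bool) := List.ofFn (fun i : Fin m => ξ.1 i)

/-- `Φ` is the boundary extension of the automorphism `φ`:
for every `ξ ∈ ∂F(A)`, the reduced words `φ(ξ|_m)` converge to `Φ ξ`. -/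
def ExtendsBd [DecidableEq α] (φ : FreeGroup α ≃* FreeGroup α) (Φ : Bd α → Bd α) : Prop :=
  ∀ ξ : Bd α, ∀ k : ℕ, ∃ n : ℕ, ∀ m, n ≤ m →
    ((φ (FreeGroup.mk (pre ξ m))).toWord).take k = List.ofFn (fun i : Fin k => (Φ ξ).1 i)

/-- `Concat g ξ η` : `η` is the reduced concatenation `g · ξ` (left translation of a
boundary point by a group element): some terminal segment of (the reduced word of) `g`
cancels against an initial segment of `ξ`, and `η` is the concatenation of the rest. -/
def Concat [DecidableEq α] (g : FreeGroup α) (ξ η : Bd α) : Prop :=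
  ∃ ℓ : ℕ, ∃ hℓ : ℓ ≤ g.toWord.length,
    (∀ i, (h : i < ℓ) → ξ.1 i = linv (g.toWord.get ⟨g.toWord.length - 1 - i, by omega⟩)) ∧
    (∀ n : ℕ, η.1 n =
      if h : n < g.toWord.length - ℓ then g.toWord.get ⟨n, by omega⟩
      else ξ.1 (n - (g.toWord.length - ℓ) + ℓ))

/-- The vertex `g` of the Cayley tree lies on the bi-infinite geodesic from `ξ` to `η`. -/
def OnGeod [DecidableEq α] (g : FreeGroup α) (ξ η : Bd α) : Prop :=
  ∃ ξ' η' : Bd α, Concat g⁻¹ ξ ξ' ∧ Concat g⁻¹ η η' ∧ ξ'.1 0 ≠ η'.1 0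

/-- The double cylinder `C²_{[v,w]}`. -/
def DblCyl [DecidableEq α] (v w : FreeGroup α) : Set (Bd α × Bd α) :=
  {p | p.1 ≠ p.2 ∧ OnGeod v p.1 p.2 ∧ OnGeod w p.1 p.2}

/-- Letter-permuting automorphism: every generator maps to a single letter. -/
def IsPermAut [DecidableEq α] (φ : FreeGroup α ≃* FreeGroup α) : Prop :=
  ∀ x : α, ((φ (FreeGroup.of x)).toWord).length = 1

/-- Elementary Nielsen automorphism: `a ↦ ab`, all other generators fixed. -/
def IsNielsenAut (φ : FreeGroup α ≃* FreeGroup α) : Prop :=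
  ∃ a b : α, a ≠ b ∧ φ (FreeGroup.of a) = FreeGroup.of a * FreeGroup.of b ∧
    ∀ x : α, x ≠ a → φ (FreeGroup.of x) = FreeGroup.of x

/-!
Put `S = {a, b}`, so that `F(A) = F(S) * F(A \ S)`. A Nielsen automorphism `φ` preserves the factor
`F(S)` and fixes the other letters, and so does `φ⁻¹`. By the normal form of the free product and
the injectivity of `φ`, a letter `x` outside `S` is never cancelled: if `u x v` is reduced, then so
is `φ(u) x φ(v)`. Hence `φ` carries the cylinder of `w x` into that of `φ(w) x`, and `φ⁻¹` carries
the latter back into the former.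

The inclusions between cylinders give the equality once `φ` and `φ⁻¹` are seen to be mutually
inverse on the boundary. Since `S` is finite, `φ` is bilipschitz for the word metric, and geodesics
in a tree are stable under such maps. So cancellation is bounded, and for every boundary point `η`
the words `φ⁻¹(η|_m)` converge to a boundary point, whose image is `η`.
-/

open Filter

section Words

theorem isReduced_invRev_iff {l : List (α × Bool)} : IsReduced (invRev l) ↔ IsReduced l := by
  classical
  rw [isReduced_iff_reduce_eq, isReduced_iff_reduce_eq, reduce_invRev, invRev_injective.eq_iff]

theorem isReduced_cons_iff {x : α × Bool} {l : List (α × Bool)} :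
    IsReduced (x :: l) ↔ l.head? ≠ some (linv x) ∧ IsReduced l := by
  rcases x with ⟨a, _ | _⟩ <;> rcases l with _ | ⟨⟨b, _ | _⟩, l⟩ <;>
    simp [linv, eq_comm (a := a)]

theorem isReduced_append_cons_iff {u v : List (α × Bool)} {x : α × Bool} :
    IsReduced (u ++ x :: v) ↔ IsReduced (linv x :: invRev u) ∧ IsReduced (x :: v) := by
  have hinv : linv x :: invRev u = invRev (u ++ [x]) := by simp [linv, invRev]
  rw [hinv, isReduced_invRev_iff]
  constructor
  · intro h
    exact ⟨h.infix ⟨[], v, by simp⟩, h.infix ⟨u, [], by simp⟩⟩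
  · rintro ⟨hu, hv⟩
    simpa using hu.append_overlap (L₃ := v) hv (List.cons_ne_nil x [])

variable [DecidableEq α]

theorem toWord_mk_of_isReduced {l : List (α × Bool)} (hl : IsReduced l) : (mk l).toWord = l :=
  toWord_mk.trans hl.reduce_eq

theorem norm_mk_of_isReduced {l : List (α × Bool)} (hl : IsReduced l) :
    (mk l).norm = l.length :=
  congrArg List.length (toWord_mk_of_isReduced hl)

theorem dropLast_toWord_prefix_toWord_mul_mk (g : FreeGroup α) (x : α × Bool) :
    g.toWord.dropLast <+: (g * mk [x]).toWord := by
  have hg : IsReduced g.toWord := isReduced_toWord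
  by_cases h : IsReduced (g.toWord ++ [x])
  · have hgx : (g * mk [x]).toWord = g.toWord ++ [x] := by
      rw [← toWord_mk_of_isReduced h, ← mul_mk, mk_toWord]
    exact hgx ▸ (List.dropLast_prefix _).trans (List.prefix_append _ _)
  · obtain ⟨p, hp⟩ : ∃ p, g.toWord = p ++ [linv x] := by
      rw [isReduced_append_cons_iff, isReduced_cons_iff, isReduced_invRev_iff] at h
      have hlast : (invRev g.toWord).head? = some x := by simpa [hg, linv] using h
      rcases List.eq_nil_or_concat' g.toWord with hnil | ⟨p, y, hp⟩
      · simp [hnil] at hlast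
      · refine ⟨p, ?_⟩
        simp only [hp, invRev, List.map_append, List.map_cons, List.map_nil, List.reverse_append,
          List.reverse_singleton, List.singleton_append, List.head?_cons,
          Option.some.injEq] at hlast
        simp [hp, ← hlast, linv]
    have hpx : g * mk [x] = mk p := by
      have hx : mk [x] = (mk [linv x])⁻¹ := by simp [inv_mk, invRev, linv]
      rw [← mk_toWord (x := g), hp, ← mul_mk, hx, mul_inv_cancel_right]
    have hpred : IsReduced p := hg.infix ⟨[], [linv x], by simp [hp]⟩
    simp [hpx, hp, toWord_mk_of_isReduced hpred]

theorem rdrop_toWord_prefix_toWord_mul_mk (g : FreeGroup α) (l : List (α × Bool)) :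
    g.toWord.rdrop l.length <+: (g * mk l).toWord := by
  induction l using List.reverseRecOn with
  | nil => simp [← one_eq_mk]
  | append_singleton l x ih =>
    have hdrop : g.toWord.rdrop (l ++ [x]).length = (g.toWord.rdrop l.length).dropLast := by
      simp only [List.rdrop, List.dropLast_eq_take, List.take_take, List.length_take,
        List.length_append, List.length_singleton]
      congr 1
      omega
    rw [hdrop, ← mul_mk, ← mul_assoc]
    have hmono : (g.toWord.rdrop l.length).dropLast <+: (g * mk l).toWord.dropLast :=
      List.prefix_of_prefix_length_le ((List.dropLast_prefix _).trans ih) (List.dropLast_prefix _)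
        (by simpa only [List.length_dropLast] using Nat.sub_le_sub_right ih.length_le 1)
    exact hmono.trans (dropLast_toWord_prefix_toWord_mul_mk _ x)

-- In the Cayley tree, the vertex `p` separates `g` from `h`, so the geodesic from `h` to `g` passes
-- through it.
theorem norm_mk_inv_mul_le {p : List (α × Bool)} {g h : FreeGroup α} (hp : p <+: h.toWord)
    (hpg : ¬ p <+: g.toWord) : ((mk p)⁻¹ * h).norm ≤ (h⁻¹ * g).norm := by
  obtain ⟨r, hr⟩ := hp
  have hh : (mk p)⁻¹ * h = mk r := by
    rw [← mk_toWord (x := h), ← hr, ← mul_mk, inv_mul_cancel_left]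
  by_contra! hlt
  have hlen : (h⁻¹ * g).toWord.length < r.length := hlt.trans_le (hh ▸ norm_mk_le)
  have hpre := rdrop_toWord_prefix_toWord_mul_mk h (h⁻¹ * g).toWord
  rw [mk_toWord, mul_inv_cancel_left, ← hr] at hpre
  refine hpg (List.IsPrefix.trans ?_ hpre)
  exact List.prefix_take_iff.2 ⟨List.prefix_append _ _, by rw [List.length_append]; omega⟩

theorem norm_map_le_of_forall {φ : FreeGroup α →* FreeGroup α} {C : ℕ}
    (hC : ∀ x : α, (φ (of x)).norm ≤ C) (g : FreeGroup α) : (φ g).norm ≤ C * g.norm := by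
  have hletter (x : α × Bool) : (φ (mk [x])).norm ≤ C := by
    rcases x with ⟨a, _ | _⟩
    · have ha : mk [(a, false)] = (of a)⁻¹ := rfl
      rw [ha, _root_.map_inv, norm_inv_eq]
      exact hC a
    · exact hC a
  have hword (l : List (α × Bool)) : (φ (mk l)).norm ≤ C * l.length := by
    induction l with
    | nil => simp [← one_eq_mk]
    | cons x t ih =>
      calc (φ (mk (x :: t))).norm = (φ (mk [x]) * φ (mk t)).norm := by
            rw [← _root_.map_mul, mul_mk, List.singleton_append]
        _ ≤ (φ (mk [x])).norm + (φ (mk t)).norm := FreeGroup.norm_mul_le _ _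
        _ ≤ C + C * t.length := Nat.add_le_add (hletter x) ih
        _ = C * (x :: t).length := by rw [List.length_cons]; ring
  simpa only [mk_toWord, FreeGroup.norm] using hword g.toWord

/-- Endomorphisms that are quasi-isometric embeddings for the word metric. Additive constants are
superfluous, since word lengths are integers and vanish only at `1`. -/
def IsBilipschitz (φ : FreeGroup α →* FreeGroup α) : Prop :=
  ∃ C : ℕ, ∀ g, (φ g).norm ≤ C * g.norm ∧ g.norm ≤ C * (φ g).norm

theorem exists_prefix_norm_mk_inv_mul_le {φ : FreeGroup α →* FreeGroup α} {C : ℕ}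
    (hC : ∀ g, (φ g).norm ≤ C * g.norm) {p : List (α × Bool)} {g : FreeGroup α}
    {v : List (α × Bool)} (hg : p <+: (φ g).toWord) (hgv : ¬ p <+: (φ (g * mk v)).toWord) :
    ∃ s, s <+: v ∧ ((mk p)⁻¹ * φ (g * mk s)).norm ≤ C := by
  induction v generalizing g with
  | nil => exact absurd hg (by simpa [← one_eq_mk] using hgv)
  | cons x t ih =>
    by_cases hx : p <+: (φ (g * mk [x])).toWord
    · obtain ⟨s, hs, hle⟩ := ih hx (by simpa [mul_assoc, mul_mk] using hgv)
      exact ⟨x :: s, List.cons_prefix_cons.2 ⟨rfl, hs⟩, by simpa [mul_assoc, mul_mk] using hle⟩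
    · refine ⟨[], List.nil_prefix, ?_⟩
      calc ((mk p)⁻¹ * φ (g * mk [])).norm = ((mk p)⁻¹ * φ g).norm := by
            rw [← one_eq_mk, mul_one]
        _ ≤ ((φ g)⁻¹ * φ (g * mk [x])).norm := norm_mk_inv_mul_le hg hx
        _ = (φ (mk [x])).norm := by rw [_root_.map_mul, inv_mul_cancel_left]
        _ ≤ C * (mk [x]).norm := hC _
        _ ≤ C := by rw [norm_mk_of_isReduced IsReduced.singleton]; simp

-- If the vertex `p` lies on the geodesic to `φ u` but not on the one to `φ (u ++ v)`, the images of
-- the paths from `u` back to `1` and from `u` on to `u ++ v` both pass near `p`, say at `φ (u * r)`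
-- and `φ (u * s)`. These are close, hence so are `u * r` and `u * s`; as `u` lies between them,
-- `φ u` is near `p` as well.
theorem norm_mk_inv_mul_le_of_not_prefix {φ : FreeGroup α →* FreeGroup α} {C : ℕ}
    (hC : ∀ g, (φ g).norm ≤ C * g.norm ∧ g.norm ≤ C * (φ g).norm) {p u v : List (α × Bool)}
    (huv : IsReduced (u ++ v)) (hpu : p <+: (φ (mk u)).toWord)
    (hpv : ¬ p <+: (φ (mk (u ++ v))).toWord) :
    ((mk p)⁻¹ * φ (mk u)).norm ≤ C + C * (C * (2 * C)) := by
  have hpone : ¬ p <+: (φ (mk u * mk (invRev u))).toWord := by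
    have hpne : p ≠ [] := fun h => hpv (h ▸ List.nil_prefix)
    simpa [← inv_mk] using hpne
  obtain ⟨r, ⟨r', hr⟩, hrC⟩ := exists_prefix_norm_mk_inv_mul_le (fun g => (hC g).1) hpu hpone
  obtain ⟨s, ⟨s', hs⟩, hsC⟩ := exists_prefix_norm_mk_inv_mul_le (v := v) (fun g => (hC g).1) hpu
    (by rwa [mul_mk])
  have hrs : (φ ((mk r)⁻¹ * mk s)).norm ≤ 2 * C := calc
    (φ ((mk r)⁻¹ * mk s)).norm =
        (((mk p)⁻¹ * φ (mk u * mk r))⁻¹ * ((mk p)⁻¹ * φ (mk u * mk s))).norm := by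
      simp only [_root_.map_mul, _root_.map_inv]
      group
    _ ≤ ((mk p)⁻¹ * φ (mk u * mk r)).norm + ((mk p)⁻¹ * φ (mk u * mk s)).norm :=
      (FreeGroup.norm_mul_le _ _).trans_eq (by rw [norm_inv_eq])
    _ ≤ 2 * C := by omega
  have hred : IsReduced (invRev r ++ s) := by
    refine huv.infix ⟨invRev r', s', ?_⟩
    rw [← hs, ← invRev_invRev (L₁ := u), ← hr, invRev_append]
    simp only [List.append_assoc]
  have hslen : (mk s).norm ≤ C * (2 * C) := calc
    (mk s).norm ≤ (invRev r ++ s).length := norm_mk_le.trans (by simp)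
    _ = ((mk r)⁻¹ * mk s).norm := by rw [inv_mk, mul_mk, norm_mk_of_isReduced hred]
    _ ≤ C * (φ ((mk r)⁻¹ * mk s)).norm := (hC _).2
    _ ≤ C * (2 * C) := Nat.mul_le_mul_left C hrs
  calc ((mk p)⁻¹ * φ (mk u)).norm = ((mk p)⁻¹ * φ (mk u * mk s) * (φ (mk s))⁻¹).norm := by
        rw [_root_.map_mul]
        group
    _ ≤ ((mk p)⁻¹ * φ (mk u * mk s)).norm + (φ (mk s)).norm :=
      (FreeGroup.norm_mul_le _ _).trans_eq (by rw [norm_inv_eq])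
    _ ≤ C + C * (C * (2 * C)) :=
      Nat.add_le_add hsC ((hC _).1.trans (Nat.mul_le_mul_left C hslen))

theorem IsBilipschitz.exists_rdrop_prefix {φ : FreeGroup α →* FreeGroup α}
    (hφ : IsBilipschitz φ) :
    ∃ K, ∀ u v, IsReduced (u ++ v) →
      (φ (mk u)).toWord.rdrop K <+: (φ (mk (u ++ v))).toWord := by
  obtain ⟨C, hC⟩ := hφ
  refine ⟨C + C * (C * (2 * C)) + 1, fun u v huv => ?_⟩
  set K := C + C * (C * (2 * C)) + 1
  set p := (φ (mk u)).toWord.rdrop K with hp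
  by_contra hpv
  have hnear : ((mk p)⁻¹ * φ (mk u)).norm < K :=
    Nat.lt_succ_of_le (norm_mk_inv_mul_le_of_not_prefix hC huv (List.take_prefix _ _) hpv)
  have hupper : (φ (mk u)).norm ≤ p.length + ((mk p)⁻¹ * φ (mk u)).norm := calc
    (φ (mk u)).norm = (mk p * ((mk p)⁻¹ * φ (mk u))).norm := by rw [mul_inv_cancel_left]
    _ ≤ (mk p).norm + ((mk p)⁻¹ * φ (mk u)).norm := FreeGroup.norm_mul_le _ _
    _ ≤ p.length + ((mk p)⁻¹ * φ (mk u)).norm := Nat.add_le_add_right norm_mk_le _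
  have hlength : p.length = (φ (mk u)).norm - K := by simp [hp, List.rdrop, FreeGroup.norm]
  have hpos : 0 < p.length := List.length_pos_iff.2 fun h => hpv (h ▸ List.nil_prefix)
  omega

theorem IsBilipschitz.exists_forall_getElem?_eq {φ : FreeGroup α →* FreeGroup α}
    (hφ : IsBilipschitz φ) (i : ℕ) :
    ∃ n, ∀ u v, IsReduced (u ++ v) → n ≤ u.length →
      ∃ x, (φ (mk u)).toWord[i]? = some x ∧ (φ (mk (u ++ v))).toWord[i]? = some x := by
  obtain ⟨K, hK⟩ := hφ.exists_rdrop_prefix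
  obtain ⟨C, hC⟩ := hφ
  refine ⟨C * (i + K) + 1, fun u v huv hu => ?_⟩
  have hlen : i + K < (φ (mk u)).toWord.length := by
    have hured : IsReduced u := huv.infix ⟨[], v, by simp⟩
    have hlt : C * (i + K) < C * (φ (mk u)).norm := calc
      C * (i + K) < u.length := hu
      _ = (mk u).norm := (norm_mk_of_isReduced hured).symm
      _ ≤ C * (φ (mk u)).norm := (hC _).2
    exact lt_of_mul_lt_mul_left hlt C.zero_le
  have hi : i < ((φ (mk u)).toWord.rdrop K).length := by
    simp only [List.rdrop, List.length_take]
    omega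
  exact ⟨_, List.prefix_iff_getElem?.1 (List.take_prefix _ _) i hi,
    List.prefix_iff_getElem?.1 (hK u v huv) i hi⟩

end Words

section Boundary

theorem length_pre (ξ : Bd α) (m : ℕ) : (pre ξ m).length = m := List.length_ofFn

theorem getElem?_pre (ξ : Bd α) {i m : ℕ} (hi : i < m) : (pre ξ m)[i]? = some (ξ.1 i) := by
  simp [pre, hi]

theorem isReduced_pre (ξ : Bd α) (m : ℕ) : IsReduced (pre ξ m) := by
  refine List.isChain_iff_getElem.2 fun i hi hfst => ?_
  simp only [pre, List.getElem_ofFn] at hfst ⊢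
  by_contra hsnd
  exact ξ.2 i (Prod.ext hfst.symm (Bool.eq_not.2 (Ne.symm hsnd)))

theorem pre_prefix_pre (ξ : Bd α) {m n : ℕ} (hmn : m ≤ n) : pre ξ m <+: pre ξ n := by
  refine List.prefix_iff_getElem?.2 fun i hi => ?_
  rw [length_pre] at hi
  simp [pre, hi.trans_le hmn]

theorem pre_length_eq_of_mem_Cyl {ξ : Bd α} {l : List (α × Bool)} (hξ : ξ ∈ Cyl l) :
    pre ξ l.length = l :=
  List.ext_getElem (length_pre _ _) fun i _ hi => by simpa [pre] using hξ i hi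

variable [DecidableEq α]

/-- Convergence of a sequence of group elements to a boundary point, in the topology of
`F(A) ∪ ∂F(A)`: every letter of the reduced words is eventually that of `ξ`. -/
def ConvergesTo (g : ℕ → FreeGroup α) (ξ : Bd α) : Prop :=
  ∀ i, ∀ᶠ m in atTop, (g m).toWord[i]? = some (ξ.1 i)

theorem ExtendsBd.convergesTo {φ : FreeGroup α ≃* FreeGroup α} {Φ : Bd α → Bd α}
    (hΦ : ExtendsBd φ Φ) (ξ : Bd α) : ConvergesTo (fun m => φ (mk (pre ξ m))) (Φ ξ) := by
  intro i
  obtain ⟨n, hn⟩ := hΦ ξ (i + 1)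
  filter_upwards [eventually_ge_atTop n] with m hm
  rw [← List.getElem?_take_of_lt (Nat.lt_succ_self i), hn m hm]
  exact getElem?_pre (Φ ξ) (Nat.lt_succ_self i)

theorem convergesTo_mk_pre (ξ : Bd α) : ConvergesTo (fun m => mk (pre ξ m)) ξ := by
  intro i
  filter_upwards [eventually_gt_atTop i] with m hm
  rw [toWord_mk_of_isReduced (isReduced_pre ξ m), getElem?_pre ξ hm]

theorem exists_convergesTo_of_forall {g : ℕ → FreeGroup α}
    (h : ∀ i : ℕ, ∃ x : α × Bool, ∀ᶠ m in atTop, (g m).toWord[i]? = some x) :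
    ∃ ξ, ConvergesTo g ξ := by
  choose x hx using h
  refine ⟨⟨x, fun n hn => ?_⟩, hx⟩
  obtain ⟨m, hm, hm'⟩ := ((hx n).and (hx (n + 1))).exists
  obtain ⟨_, hxn⟩ := List.getElem?_eq_some_iff.1 hm
  obtain ⟨hlt, hxn'⟩ := List.getElem?_eq_some_iff.1 hm'
  have hred : List.IsChain _ (g m).toWord := isReduced_toWord
  have hchain := List.isChain_iff_getElem.1 hred n hlt
  rw [hxn, hxn', hn] at hchain
  simp [linv] at hchain

namespace ConvergesTo

variable {g : ℕ → FreeGroup α} {ξ η : Bd α}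

theorem unique (hξ : ConvergesTo g ξ) (hη : ConvergesTo g η) : ξ = η := by
  refine Subtype.ext (funext fun i => ?_)
  obtain ⟨m, hm, hm'⟩ := ((hξ i).and (hη i)).exists
  exact Option.some_injective _ (hm.symm.trans hm')

theorem mem_Cyl (hξ : ConvergesTo g ξ) {l : List (α × Bool)}
    (hl : ∀ᶠ m in atTop, l <+: (g m).toWord) : ξ ∈ Cyl l := by
  intro i hi
  obtain ⟨m, hm, hm'⟩ := ((hξ i).and hl).exists
  exact Option.some_injective _ (hm.symm.trans (List.prefix_iff_getElem?.1 hm' i hi))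

theorem eventually_pre_prefix (hξ : ConvergesTo g ξ) (n : ℕ) :
    ∀ᶠ m in atTop, pre ξ n <+: (g m).toWord := by
  filter_upwards [(Set.finite_lt_nat n).eventually_all.2 fun i _ => hξ i] with m hm
  refine List.prefix_iff_getElem?.2 fun i hi => ?_
  simpa [pre] using hm i (length_pre ξ n ▸ hi)

theorem map {φ : FreeGroup α →* FreeGroup α} (hφ : IsBilipschitz φ) (hg : ConvergesTo g ξ)
    (hη : ConvergesTo (fun m => φ (mk (pre ξ m))) η) : ConvergesTo (fun m => φ (g m)) η := by
  intro i
  obtain ⟨n, hn⟩ := hφ.exists_forall_getElem?_eq i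
  obtain ⟨N, hN, hnN⟩ := ((hη i).and (eventually_ge_atTop n)).exists
  filter_upwards [hg.eventually_pre_prefix N] with m ⟨t, ht⟩
  obtain ⟨x, hx, hx'⟩ := hn (pre ξ N) t (ht ▸ isReduced_toWord) (by rwa [length_pre])
  rw [ht, mk_toWord] at hx'
  rw [hx', ← hx, hN]

end ConvergesTo

theorem IsBilipschitz.exists_convergesTo {φ : FreeGroup α →* FreeGroup α} (hφ : IsBilipschitz φ)
    (ξ : Bd α) : ∃ η, ConvergesTo (fun m => φ (mk (pre ξ m))) η := by
  refine exists_convergesTo_of_forall fun i => ?_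
  obtain ⟨n, hn⟩ := hφ.exists_forall_getElem?_eq i
  have hext (m : ℕ) (hm : n ≤ m) :
      ∃ x, (φ (mk (pre ξ n))).toWord[i]? = some x ∧ (φ (mk (pre ξ m))).toWord[i]? = some x := by
    obtain ⟨t, ht⟩ := pre_prefix_pre ξ hm
    rw [← ht]
    exact hn _ t (ht ▸ isReduced_pre ξ m) (length_pre ξ n).ge
  obtain ⟨x, hx, -⟩ := hext n le_rfl
  refine ⟨x, ?_⟩
  filter_upwards [eventually_ge_atTop n] with m hm
  obtain ⟨y, hy, hy'⟩ := hext m hm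
  rw [hy', ← hy, hx]

theorem ExtendsBd.eq_of_convergesTo_symm {φ : FreeGroup α ≃* FreeGroup α} {Φ : Bd α → Bd α}
    (hΦ : ExtendsBd φ Φ) (hφ : IsBilipschitz (φ : FreeGroup α →* FreeGroup α)) {ξ η : Bd α}
    (hξ : ConvergesTo (fun m => φ.symm (mk (pre η m))) ξ) : Φ ξ = η := by
  have hlim := hξ.map hφ (hΦ.convergesTo ξ)
  simp only [MonoidHom.coe_coe, MulEquiv.apply_symm_apply] at hlim
  exact hlim.unique (convergesTo_mk_pre η)

end Boundary

section Support

theorem mk_mem_closure_image_of {S : Set α} {l : List (α × Bool)} (hl : ∀ x ∈ l, x.1 ∈ S) :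
    mk l ∈ Subgroup.closure (of '' S) := by
  induction l with
  | nil => exact one_mem _
  | cons x t ih =>
    rw [List.forall_mem_cons] at hl
    have hx : of x.1 ∈ Subgroup.closure (of '' S) := Subgroup.subset_closure ⟨x.1, hl.1, rfl⟩
    rw [← List.singleton_append, ← mul_mk]
    refine mul_mem ?_ (ih hl.2)
    rcases x with ⟨a, _ | _⟩
    · exact inv_mem hx
    · exact hx

theorem mem_closure_image_of_iff [DecidableEq α] {S : Set α} {g : FreeGroup α} :
    g ∈ Subgroup.closure (of '' S) ↔ ∀ x ∈ g.toWord, x.1 ∈ S := by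
  refine ⟨fun hg => ?_, fun h => mk_toWord (x := g) ▸ mk_mem_closure_image_of h⟩
  induction hg using Subgroup.closure_induction with
  | mem g hg =>
    obtain ⟨a, ha, rfl⟩ := hg
    simpa using ha
  | one => simp
  | mul g h _ _ ihg ihh =>
    intro x hx
    exact (List.mem_append.1 ((toWord_mul_sublist g h).subset hx)).elim (ihg x) (ihh x)
  | inv g _ ih =>
    intro x hx
    rw [toWord_inv, invRev, List.mem_reverse, List.mem_map] at hx
    obtain ⟨y, hy, rfl⟩ := hx
    exact ih y hy

theorem toWord_mul_mk_cons_of_mem_closure [DecidableEq α] {S : Set α} {g : FreeGroup α}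
    (hg : g ∈ Subgroup.closure (of '' S)) {x : α × Bool} (hx : x.1 ∉ S) {l : List (α × Bool)}
    (hl : IsReduced (x :: l)) : (g * mk (x :: l)).toWord = g.toWord ++ x :: l := by
  have hhead : (invRev g.toWord).head? ≠ some x := fun h =>
    hx (mem_closure_image_of_iff.1 (inv_mem hg) x (toWord_inv g ▸ List.mem_of_head? h))
  have hred : IsReduced (g.toWord ++ x :: l) :=
    isReduced_append_cons_iff.2 ⟨isReduced_cons_iff.2
      ⟨by simpa [linv] using hhead, isReduced_invRev_iff.2 isReduced_toWord⟩, hl⟩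
  rw [← toWord_mk_of_isReduced hred, ← mul_mk, mk_toWord]

/-- Endomorphisms of `F(A) = F(S) * F(A \ S)` that preserve the factor `F(S)` and restrict to the
identity on the basis of the other factor. -/
structure IsSupportedOn (φ : FreeGroup α →* FreeGroup α) (S : Set α) : Prop where
  intro ::
  map_of_mem_closure : ∀ x ∈ S, φ (of x) ∈ Subgroup.closure (of '' S)
  map_of_eq : ∀ x ∉ S, φ (of x) = of x

namespace IsSupportedOn

variable {φ : FreeGroup α →* FreeGroup α} {S : Set α}

theorem map_mem_closure (hφ : IsSupportedOn φ S) {g : FreeGroup α}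
    (hg : g ∈ Subgroup.closure (of '' S)) : φ g ∈ Subgroup.closure (of '' S) := by
  have hle : Subgroup.closure (of '' S) ≤ (Subgroup.closure (of '' S)).comap φ := by
    rw [Subgroup.closure_le]
    rintro _ ⟨x, hx, rfl⟩
    exact hφ.map_of_mem_closure x hx
  exact hle hg

theorem map_mk_singleton (hφ : IsSupportedOn φ S) {x : α × Bool} (hx : x.1 ∉ S) :
    φ (mk [x]) = mk [x] := by
  rcases x with ⟨a, _ | _⟩
  · have ha : mk [(a, false)] = (of a)⁻¹ := rfl
    rw [ha, _root_.map_inv, hφ.map_of_eq a hx]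
  · exact hφ.map_of_eq a hx

section NormalForm

variable [DecidableEq α]

theorem exists_norm_map_le (hφ : IsSupportedOn φ S) (hS : S.Finite) :
    ∃ C, ∀ g, (φ g).norm ≤ C * g.norm := by
  obtain ⟨C, hC⟩ := (hS.image fun x => (φ (of x)).norm).bddAbove
  refine ⟨max 1 C, norm_map_le_of_forall fun x => ?_⟩
  by_cases hx : x ∈ S
  · exact (hC (Set.mem_image_of_mem _ hx)).trans (le_max_right 1 C)
  · rw [hφ.map_of_eq x hx, norm_of]
    exact le_max_left 1 C

theorem map_mk_append_cons (hφ : IsSupportedOn φ S) {u v : List (α × Bool)} {x : α × Bool}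
    (hx : x.1 ∉ S) : φ (mk (u ++ x :: v)) = φ (mk u) * mk (x :: (φ (mk v)).toWord) := by
  rw [← mul_mk, ← List.singleton_append, ← mul_mk, _root_.map_mul, _root_.map_mul,
    hφ.map_mk_singleton hx, ← List.singleton_append (l := (φ (mk v)).toWord), ← mul_mk, mk_toWord]

theorem head?_eq_of_head?_map (hφ : IsSupportedOn φ S) (hinj : Function.Injective φ)
    {s l : List (α × Bool)} (hs : ∀ y ∈ s, y.1 ∈ S) (hl : IsReduced (s ++ l)) {x : α × Bool}
    (hx : x.1 ∉ S) (hhead : (φ (mk (s ++ l))).toWord.head? = some x) :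
    (s ++ l).head? = some x := by
  have hsS := hφ.map_mem_closure (mk_mem_closure_image_of hs)
  induction l generalizing s x with
  | nil =>
    rw [List.append_nil] at hhead
    exact absurd (mem_closure_image_of_iff.1 hsS x (List.mem_of_head? hhead)) hx
  | cons y t ih =>
    by_cases hy : y.1 ∈ S
    · have hsy : ∀ z ∈ s ++ [y], z.1 ∈ S :=
        List.forall_mem_append.2 ⟨hs, List.forall_mem_singleton.2 hy⟩
      rw [List.append_cons] at hl hhead ⊢
      exact ih hsy hl hx hhead (hφ.map_mem_closure (mk_mem_closure_image_of hsy))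
    · obtain ⟨hyt, ht⟩ := isReduced_cons_iff.1 (isReduced_append_cons_iff.1 hl).2
      have hred : IsReduced (y :: (φ (mk t)).toWord) :=
        isReduced_cons_iff.2 ⟨fun h => hyt (ih (s := []) (by simp) ht hy h (by simp [← one_eq_mk])),
          isReduced_toWord⟩
      rw [hφ.map_mk_append_cons hy, toWord_mul_mk_cons_of_mem_closure hsS hy hred] at hhead
      rcases hword : (φ (mk s)).toWord with _ | ⟨z, r⟩
      · have hs1 : mk s = 1 := hinj ((toWord_eq_nil_iff.1 hword).trans (_root_.map_one φ).symm)
        have hsnil : s = [] := by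
          have hsred : IsReduced s := hl.infix ⟨[], y :: t, by simp⟩
          rw [← toWord_mk_of_isReduced hsred, hs1, toWord_one]
        rw [hword] at hhead
        simpa [hsnil] using hhead
      · have hzx : z = x := by simpa [hword] using hhead
        exact absurd (mem_closure_image_of_iff.1 hsS z (by simp [hword])) (hzx ▸ hx)

theorem isReduced_cons_toWord_map (hφ : IsSupportedOn φ S) (hinj : Function.Injective φ)
    {l : List (α × Bool)} {x : α × Bool} (hx : x.1 ∉ S) (hl : IsReduced (x :: l)) :
    IsReduced (x :: (φ (mk l)).toWord) := by
  obtain ⟨hxl, hl⟩ := isReduced_cons_iff.1 hl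
  exact isReduced_cons_iff.2
    ⟨mt (hφ.head?_eq_of_head?_map hinj (s := []) (by simp) hl hx) hxl, isReduced_toWord⟩

theorem toWord_map_mk_append_cons (hφ : IsSupportedOn φ S) (hinj : Function.Injective φ)
    {u v : List (α × Bool)} {x : α × Bool} (hx : x.1 ∉ S) (huv : IsReduced (u ++ x :: v)) :
    (φ (mk (u ++ x :: v))).toWord = (φ (mk u)).toWord ++ x :: (φ (mk v)).toWord := by
  obtain ⟨hu, hv⟩ := isReduced_append_cons_iff.1 huv
  have hu' : IsReduced (linv x :: invRev (φ (mk u)).toWord) := by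
    rw [← toWord_inv, ← _root_.map_inv, inv_mk]
    exact hφ.isReduced_cons_toWord_map hinj hx hu
  have hred := isReduced_append_cons_iff.2 ⟨hu', hφ.isReduced_cons_toWord_map hinj hx hv⟩
  rw [hφ.map_mk_append_cons hx, ← toWord_mk_of_isReduced hred, ← mul_mk, mk_toWord]

end NormalForm

theorem mem_closure_of_map_mem (hφ : IsSupportedOn φ S) (hinj : Function.Injective φ)
    {g : FreeGroup α} (hg : φ g ∈ Subgroup.closure (of '' S)) :
    g ∈ Subgroup.closure (of '' S) := by
  classical
  refine mem_closure_image_of_iff.2 fun x hx => ?_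
  by_contra hxS
  obtain ⟨u, v, huv⟩ := List.append_of_mem hx
  have hword := hφ.toWord_map_mk_append_cons hinj hxS (huv ▸ isReduced_toWord)
  rw [← huv, mk_toWord] at hword
  exact hxS (mem_closure_image_of_iff.1 hg x (by simp [hword]))

variable {φ : FreeGroup α ≃* FreeGroup α}

theorem symm (hφ : IsSupportedOn (φ : FreeGroup α →* FreeGroup α) S) :
    IsSupportedOn (φ.symm : FreeGroup α →* FreeGroup α) S where
  map_of_mem_closure x hx := by
    refine hφ.mem_closure_of_map_mem φ.injective ?_
    simpa using Subgroup.subset_closure (Set.mem_image_of_mem of hx)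
  map_of_eq x hx := φ.symm_apply_eq.2 (hφ.map_of_eq x hx).symm

theorem isBilipschitz [DecidableEq α] (hφ : IsSupportedOn (φ : FreeGroup α →* FreeGroup α) S)
    (hS : S.Finite) : IsBilipschitz (φ : FreeGroup α →* FreeGroup α) := by
  obtain ⟨C, hC⟩ := hφ.exists_norm_map_le hS
  obtain ⟨D, hD⟩ := hφ.symm.exists_norm_map_le hS
  refine ⟨max C D, fun g => ⟨?_, ?_⟩⟩
  · exact (hC g).trans (Nat.mul_le_mul_right _ (le_max_left C D))
  · have hg : g.norm ≤ D * (φ g).norm := by simpa using hD (φ g)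
    exact hg.trans (Nat.mul_le_mul_right _ (le_max_right C D))

end IsSupportedOn

theorem ConvergesTo.mem_Cyl_of_isSupportedOn [DecidableEq α] {φ : FreeGroup α →* FreeGroup α}
    {S : Set α} (hφ : IsSupportedOn φ S) (hinj : Function.Injective φ) {ξ η : Bd α}
    (hη : ConvergesTo (fun m => φ (mk (pre ξ m))) η) {x : α × Bool} (hx : x.1 ∉ S)
    {l : List (α × Bool)} (hξ : ξ ∈ Cyl (l ++ [x])) : η ∈ Cyl ((φ (mk l)).toWord ++ [x]) := by
  refine hη.mem_Cyl ?_
  filter_upwards [eventually_ge_atTop (l ++ [x]).length] with m hm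
  obtain ⟨v, hv⟩ := pre_length_eq_of_mem_Cyl hξ ▸ pre_prefix_pre ξ hm
  have hpre : pre ξ m = l ++ x :: v := by rw [← hv, List.append_assoc, List.singleton_append]
  rw [hpre, hφ.toWord_map_mk_append_cons hinj hx (hpre ▸ isReduced_pre ξ m)]
  exact ⟨(φ (mk v)).toWord, by simp⟩

theorem isSupportedOn_pair {a b : α} {φ : FreeGroup α →* FreeGroup α}
    (ha : φ (of a) = of a * of b) (hφ : ∀ x, x ≠ a → φ (of x) = of x) :
    IsSupportedOn φ {a, b} where
  map_of_mem_closure x hx := by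
    have hof {y : α} (hy : y ∈ ({a, b} : Set α)) :
        of y ∈ Subgroup.closure (of '' ({a, b} : Set α)) :=
      Subgroup.subset_closure (Set.mem_image_of_mem of hy)
    by_cases hxa : x = a
    · rw [hxa, ha]
      exact mul_mem (hof (by simp)) (hof (by simp))
    · rw [hφ x hxa]
      exact hof hx
  map_of_eq x hx := hφ x fun hxa => hx (Or.inl hxa)

end Support

theorem stmt11_general [DecidableEq α] {S : Set α} (hS : S.Finite)
    {φ : FreeGroup α ≃* FreeGroup α} (hφ : IsSupportedOn (φ : FreeGroup α →* FreeGroup α) S)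
    {Φ : Bd α → Bd α} (hΦ : ExtendsBd φ Φ) {w : FreeGroup α} {x : α × Bool} (hx : x.1 ∉ S)
    (hwx : (w * mk [x]).toWord = w.toWord ++ [x]) :
    Φ '' Cyl (w * mk [x]).toWord = Cyl (φ w * mk [x]).toWord := by
  have hφwx : (φ w * mk [x]).toWord = (φ w).toWord ++ [x] := by
    have hred : IsReduced (w.toWord ++ [x]) := hwx ▸ isReduced_toWord
    have hword := hφ.toWord_map_mk_append_cons φ.injective hx hred
    rw [hφ.map_mk_append_cons hx] at hword
    simpa [mk_toWord, ← one_eq_mk] using hword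
  rw [hwx, hφwx]
  refine Set.Subset.antisymm (Set.image_subset_iff.2 fun ξ hξ => ?_) fun η hη => ?_
  · simpa [mk_toWord] using (hΦ.convergesTo ξ).mem_Cyl_of_isSupportedOn hφ φ.injective hx hξ
  · obtain ⟨ξ, hξ⟩ := (hφ.symm.isBilipschitz hS).exists_convergesTo η
    have hmem := hξ.mem_Cyl_of_isSupportedOn hφ.symm φ.symm.injective hx hη
    exact ⟨ξ, by simpa [mk_toWord] using hmem, hΦ.eq_of_convergesTo_symm (hφ.isBilipschitz hS) hξ⟩

/-- Nielsen automorphism `a ↦ ab`: `φ(C¹_{w·c_j}) = C¹_{φ(w)·c_j}` and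
`φ(C¹_{w·c_j⁻¹}) = C¹_{φ(w)·c_j⁻¹}`. -/
theorem stmt11 [DecidableEq α] [Nontrivial α] (a b c : α) (hab : a ≠ b)
    (hca : c ≠ a) (hcb : c ≠ b)
    (φ : FreeGroup α ≃* FreeGroup α)
    (hφa : φ (FreeGroup.of a) = FreeGroup.of a * FreeGroup.of b)
    (hφ : ∀ x : α, x ≠ a → φ (FreeGroup.of x) = FreeGroup.of x)
    (Φ : Bd α → Bd α) (hΦ : ExtendsBd φ Φ)
    (w : FreeGroup α) :
    ((w * FreeGroup.of c).toWord = w.toWord ++ [(c, true)] →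
      Φ '' Cyl ((w * FreeGroup.of c).toWord) = Cyl ((φ w * FreeGroup.of c).toWord)) ∧
    ((w * (FreeGroup.of c)⁻¹).toWord = w.toWord ++ [(c, false)] →
      Φ '' Cyl ((w * (FreeGroup.of c)⁻¹).toWord) =
        Cyl ((φ w * (FreeGroup.of c)⁻¹).toWord)) := by
  have hsupp : IsSupportedOn (φ : FreeGroup α →* FreeGroup α) {a, b} := isSupportedOn_pair hφa hφ
  have hc : c ∉ ({a, b} : Set α) := by simp [hca, hcb]
  exact ⟨stmt11_general (x := (c, true)) (Set.toFinite _) hsupp hΦ hc,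
    stmt11_general (x := (c, false)) (Set.toFinite _) hsupp hΦ hc⟩
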